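/- arXiv:2509.14538 — 2 statements merged into one kernel-verified Lean document; each statement's English description precedes it below -/
import Mathlib

section
/- Let n = 2 and fix g = 4π ∑_{j=1}^{k₁} m_j δ_{p_j}, h = 4π ∑_{j=1}^{k₂} n_j δ_{q_j} with m_j, n_j ∈ ℕ. For each λ > 0 let (u_λ, v_λ) be a topological solution of Δu = λ e^v (e^u − 1) + g, Δv = λ e^u (e^v − 1) + h on ℤ². Then for every x ∈ ℤ², as λ → 0⁺: if g ≢ 0 and h ≢ 0 then u_λ(x) → −∞ and v_λ(x) → −∞; if g ≢ 0 and h ≡ 0 then u_λ(x) → −∞ and v_λ(x) → 0; if g ≡ 0 and h ≢ 0 then u_λ(x) → 0 and v_λ(x) → −∞; if g ≡ 0 and h ≡ 0 then u_λ(x) → 0 and v_λ(x) → 0. -/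
/-!
By the maximum principle `u, v ≤ 0`; where a source vanishes identically the same principle applied
to `-u` gives `u ≡ 0`. Otherwise `W = 1 - u` is positive and `λ eᵛ (1 - eᵘ) ≤ λ (-u)` turns the
equation into `ΔW ≤ λ W - g`. Testing this against `η² / W` for a finitely supported `η`, Picone's
inequality on each edge yields
`g(p) η(p)² / W(p) ≤ λ ‖η‖² + energy(η)`.
Points of `ℤ²` have zero capacity, as logarithmic cutoffs show: there is `η` with `η(p) = 1` and
arbitrarily small energy. Letting `λ → 0⁺` first and then `energy(η) → 0` forces `W(p) → ∞` wherever
`g(p) > 0`, and a Harnack inequality along edges carries the divergence to every lattice point.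
-/

open Filter Real

noncomputable section

namespace CS

abbrev Lat (n : ℕ) := Fin n → ℤ

/-- d(x) = ∑ᵢ |xᵢ|, the graph distance to the origin on ℤⁿ. -/
def latDist {n : ℕ} (x : Lat n) : ℕ := ∑ i, (x i).natAbs

/-- x ~ y iff ∑ᵢ |xᵢ − yᵢ| = 1. -/
def adjacent {n : ℕ} (x y : Lat n) : Prop := (∑ i, (x i - y i).natAbs) = 1

instance {n : ℕ} (x y : Lat n) : Decidable (adjacent x y) :=
  decidable_of_iff ((∑ i, (x i - y i).natAbs) = 1) Iff.rfl

def unitVec {n : ℕ} (i : Fin n) : Lat n := fun j => if j = i then 1 else 0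

/-- The graph Laplacian Δu(x) = ∑_{y ~ x} (u(y) − u(x)) on ℤⁿ. -/
def lapl {n : ℕ} (u : Lat n → ℝ) (x : Lat n) : ℝ :=
  ∑ i, (u (x + unitVec i) + u (x - unitVec i) - 2 * u x)

/-- The filter of neighborhoods of infinity (d(x) → +∞) on ℤⁿ. -/
def atInfty (n : ℕ) : Filter (Lat n) := Filter.comap latDist Filter.atTop

/-- The Dirac mass at p. -/
def dirac {n : ℕ} (p x : Lat n) : ℝ := if x = p then 1 else 0

/-- (u,v) is a topological solution of Δu = λ eᵛ(eᵘ−1) + g, Δv = λ eᵘ(eᵛ−1) + h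
with u, v → 0 at infinity. -/
def IsTopSol {n : ℕ} (lam : ℝ) (g h u v : Lat n → ℝ) : Prop :=
  (∀ x, lapl u x = lam * Real.exp (v x) * (Real.exp (u x) - 1) + g x) ∧
  (∀ x, lapl v x = lam * Real.exp (u x) * (Real.exp (v x) - 1) + h x) ∧
  Filter.Tendsto u (atInfty n) (nhds 0) ∧
  Filter.Tendsto v (atInfty n) (nhds 0)

open Topology

variable {n : ℕ}

/-! ### The lattice and its Laplacian -/

lemma unitVec_eq_single (i : Fin n) : unitVec i = Pi.single i 1 := by
  ext j
  simp [unitVec, Pi.single_apply]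

lemma norm_unitVec (i : Fin n) : ‖unitVec i‖ = 1 := by
  rw [unitVec_eq_single, Pi.norm_single, norm_one]

lemma lattice_induction {P : Lat n → Prop} {p : Lat n} (base : P p)
    (add : ∀ x i, P x → P (x + unitVec i)) (sub : ∀ x i, P x → P (x - unitVec i))
    (x : Lat n) : P x := by
  have translate_zsmul (i : Fin n) (c : ℤ) (y : Lat n) (hy : P y) : P (y + c • unitVec i) := by
    induction c using Int.induction_on with
    | zero => simpa using hy
    | succ k ih => simpa [add_smul, add_assoc] using add _ i ih
    | pred k ih => simpa [sub_smul, add_sub_assoc] using sub _ i ih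
  have translate (z : Lat n) : ∀ y, P y → P (y + z) := by
    rw [← Finset.univ_sum_single z]
    refine Finset.sum_induction _ (fun z => ∀ y, P y → P (y + z)) (fun a b ha hb y hy => ?_)
      (by simp) (fun i _ y hy => ?_)
    · simpa [add_assoc] using hb _ (ha y hy)
    · simpa [unitVec_eq_single, ← Pi.single_smul] using translate_zsmul i (z i) y hy
  simpa using translate (x - p) p base

lemma cofinite_le_atInfty (n : ℕ) : cofinite ≤ atInfty n := by
  rw [atInfty, ← tendsto_iff_comap, ← Nat.cofinite_eq_atTop]
  refine Tendsto.cofinite_of_finite_preimage_singleton fun r => ?_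
  refine ((Set.finite_Icc (fun _ => -(r : ℤ)) fun _ => (r : ℤ)).subset fun x hx => ?_).to_subtype
  have abs_coord_le (i : Fin n) : |x i| ≤ r := by
    rw [Int.abs_eq_natAbs]
    exact_mod_cast (Finset.single_le_sum (f := fun i => (x i).natAbs) (fun _ _ => Nat.zero_le _)
      (Finset.mem_univ i)).trans_eq hx
  exact ⟨fun i => (abs_le.1 (abs_coord_le i)).1, fun i => (abs_le.1 (abs_coord_le i)).2⟩

lemma lapl_const_sub (c : ℝ) (u : Lat n → ℝ) (x : Lat n) :
    lapl (fun y => c - u y) x = -lapl u x := by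
  simp only [lapl, ← Finset.sum_neg_distrib]
  exact Finset.sum_congr rfl fun i _ => by ring

lemma lapl_neg (u : Lat n → ℝ) (x : Lat n) : lapl (-u) x = -lapl u x := by
  simpa only [zero_sub, ← Pi.neg_def] using lapl_const_sub 0 u x

lemma lapl_nonpos_of_forall_le {u : Lat n → ℝ} {z : Lat n} (hz : ∀ y, u y ≤ u z) :
    lapl u z ≤ 0 :=
  Finset.sum_nonpos fun i _ => by linarith [hz (z + unitVec i), hz (z - unitVec i)]

lemma nonpos_of_lapl_pos {u : Lat n → ℝ} (hu : Tendsto u (atInfty n) (𝓝 0))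
    (hlapl : ∀ x, 0 < u x → 0 < lapl u x) (x : Lat n) : u x ≤ 0 := by
  by_contra! hx
  have le_at_infty : ∀ᶠ y in cocompact (Lat n), u y ≤ u x := by
    rw [cocompact_eq_cofinite]
    exact ((hu.mono_left (cofinite_le_atInfty n)).eventually_lt_const hx).mono fun _ => le_of_lt
  obtain ⟨z, hz⟩ := continuous_of_discreteTopology.exists_forall_ge' x le_at_infty
  exact (lapl_nonpos_of_forall_le hz).not_gt (hlapl z (hx.trans_le (hz x)))

/-! ### Dirichlet energy and Picone's inequality -/

/-- The Dirichlet energy `∑ |η(x) - η(y)|²` over the edges of `ℤⁿ`, each edge being listed once as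
`{x, x + unitVec i}`. Only meant for finitely supported `η`, since `tsum` is `0` on divergent
series. -/
def dirichletEnergy (η : Lat n → ℝ) : ℝ := ∑ i, ∑' x, (η (x + unitVec i) - η x) ^ 2

lemma dirichletEnergy_comp_sub (η : Lat n → ℝ) (p : Lat n) :
    dirichletEnergy (fun x => η (x - p)) = dirichletEnergy η := by
  refine Finset.sum_congr rfl fun i _ => ?_
  rw [← (Equiv.subRight p).tsum_eq fun x => (η (x + unitVec i) - η x) ^ 2]
  simp [add_sub_right_comm]

lemma tsum_mul_second_difference {G : Type*} [AddGroup G] {φ : G → ℝ} (hφ : φ.HasFiniteSupport)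
    (w : G → ℝ) (e : G) :
    ∑' x, φ x * (w (x + e) + w (x - e) - 2 * w x) =
      -∑' x, (φ (x + e) - φ x) * (w (x + e) - w x) := by
  have hforward : Summable fun x => φ x * (w (x + e) - w x) :=
    summable_of_hasFiniteSupport (by fun_prop)
  have hbackward : Summable fun x => φ x * (w x - w (x - e)) :=
    summable_of_hasFiniteSupport (by fun_prop)
  have hshifted : Summable fun x => φ (x + e) * (w (x + e) - w x) :=
    summable_of_hasFiniteSupport
      ((hφ.fun_comp_of_injective (add_left_injective e)).fun_mul_left _)
  have backward_eq_shifted :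
      ∑' x, φ x * (w x - w (x - e)) = ∑' x, φ (x + e) * (w (x + e) - w x) := by
    rw [← (Equiv.addRight e).tsum_eq]
    simp
  calc ∑' x, φ x * (w (x + e) + w (x - e) - 2 * w x)
      = ∑' x, (φ x * (w (x + e) - w x) - φ x * (w x - w (x - e))) :=
        tsum_congr fun x => by ring
    _ = ∑' x, φ x * (w (x + e) - w x) - ∑' x, φ (x + e) * (w (x + e) - w x) := by
        rw [hforward.tsum_sub hbackward, backward_eq_shifted]
    _ = -∑' x, (φ (x + e) - φ x) * (w (x + e) - w x) := by
        simp only [sub_mul (φ _)]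
        rw [hshifted.tsum_sub hforward, neg_sub]

lemma tsum_mul_lapl {φ : Lat n → ℝ} (hφ : φ.HasFiniteSupport) (w : Lat n → ℝ) :
    ∑' x, φ x * lapl w x =
      -∑ i, ∑' x, (φ (x + unitVec i) - φ x) * (w (x + unitVec i) - w x) := by
  simp only [lapl, Finset.mul_sum]
  rw [Summable.tsum_finsetSum fun i _ => summable_of_hasFiniteSupport (by fun_prop),
    ← Finset.sum_neg_distrib]
  exact Finset.sum_congr rfl fun i _ => tsum_mul_second_difference hφ w (unitVec i)

lemma picone {a b : ℝ} (ha : 0 < a) (hb : 0 < b) (s t : ℝ) :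
    (t ^ 2 / b - s ^ 2 / a) * (b - a) ≤ (t - s) ^ 2 := by
  have defect_eq : (t - s) ^ 2 - (t ^ 2 / b - s ^ 2 / a) * (b - a) =
      (s * b - t * a) ^ 2 / (a * b) := by
    field_simp
    ring
  have defect_nonneg : 0 ≤ (s * b - t * a) ^ 2 / (a * b) := by positivity
  linarith

lemma neg_dirichletEnergy_le_tsum_mul_lapl {W η : Lat n → ℝ} (hW : ∀ x, 0 < W x)
    (hη : η.HasFiniteSupport) :
    -dirichletEnergy η ≤ ∑' x, η x ^ 2 / W x * lapl W x := by
  have hφ : (fun x => η x ^ 2 / W x).HasFiniteSupport := by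
    simp only [div_eq_mul_inv]
    fun_prop (disch := norm_num)
  rw [tsum_mul_lapl hφ, neg_le_neg_iff]
  refine Finset.sum_le_sum fun i _ => ?_
  have hη_diff := (hη.fun_comp_of_injective (add_left_injective (unitVec i))).fun_sub hη
  have hφ_diff := (hφ.fun_comp_of_injective (add_left_injective (unitVec i))).fun_sub hφ
  exact Summable.tsum_le_tsum (fun x => picone (hW x) (hW (x + unitVec i)) _ _)
    (summable_of_hasFiniteSupport (hφ_diff.fun_mul_left _))
    (summable_of_hasFiniteSupport (hη_diff.fun_comp (g := (· ^ 2)) (zero_pow two_ne_zero)))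

/-! ### Positive supersolutions -/

/-- `W` is a positive supersolution of the resolvent equation `(λ - Δ) W = g`. -/
structure IsPosSupersolution (lam : ℝ) (g W : Lat n → ℝ) : Prop where
  pos : ∀ x, 0 < W x
  lapl_le : ∀ x, lapl W x ≤ lam * W x - g x

namespace IsPosSupersolution

variable {lam : ℝ} {g W : Lat n → ℝ}

lemma source_mul_sq_div_le (hW : IsPosSupersolution lam g W) (hg : ∀ x, 0 ≤ g x)
    {η : Lat n → ℝ} (hη : η.HasFiniteSupport) (p : Lat n) :
    g p * (η p ^ 2 / W p) ≤ lam * ∑' x, η x ^ 2 + dirichletEnergy η := by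
  have hφ : (fun x => η x ^ 2 / W x).HasFiniteSupport := by
    simp only [div_eq_mul_inv]
    fun_prop (disch := norm_num)
  have hφ_nonneg (x : Lat n) : 0 ≤ η x ^ 2 / W x := div_nonneg (sq_nonneg _) (hW.pos x).le
  have hsq : Summable fun x => η x ^ 2 :=
    summable_of_hasFiniteSupport (by fun_prop (disch := norm_num))
  have hsource : Summable fun x => g x * (η x ^ 2 / W x) :=
    summable_of_hasFiniteSupport (by fun_prop)
  have tested : ∑' x, η x ^ 2 / W x * lapl W x ≤
      lam * ∑' x, η x ^ 2 - ∑' x, g x * (η x ^ 2 / W x) := by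
    rw [← tsum_mul_left, ← (hsq.mul_left lam).tsum_sub hsource]
    refine Summable.tsum_le_tsum (fun x => ?_) (summable_of_hasFiniteSupport (by fun_prop))
      ((hsq.mul_left lam).sub hsource)
    refine (mul_le_mul_of_nonneg_left (hW.lapl_le x) (hφ_nonneg x)).trans_eq ?_
    have := (hW.pos x).ne'
    field_simp
  have single_le : g p * (η p ^ 2 / W p) ≤ ∑' x, g x * (η x ^ 2 / W x) :=
    hsource.le_tsum p fun x _ => mul_nonneg (hg x) (hφ_nonneg x)
  linarith [neg_dirichletEnergy_le_tsum_mul_lapl hW.pos hη]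

lemma add_neighbors_le (hW : IsPosSupersolution lam g W) (hg : ∀ x, 0 ≤ g x) (x : Lat n)
    (i : Fin n) : W (x + unitVec i) + W (x - unitVec i) ≤ (lam + 2 * n) * W x := by
  have sum_eq : ∑ j, (W (x + unitVec j) + W (x - unitVec j)) = lapl W x + 2 * n * W x := by
    simp only [lapl, Finset.sum_sub_distrib, Finset.sum_const, Finset.card_univ, Fintype.card_fin,
      nsmul_eq_mul]
    ring
  have le_sum : W (x + unitVec i) + W (x - unitVec i) ≤
      ∑ j, (W (x + unitVec j) + W (x - unitVec j)) :=
    Finset.single_le_sum (f := fun j => W (x + unitVec j) + W (x - unitVec j))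
      (fun j _ => (add_pos (hW.pos _) (hW.pos _)).le) (Finset.mem_univ i)
  linarith [hW.lapl_le x, hg x]

lemma le_mul_of_add_unitVec (hW : IsPosSupersolution lam g W) (hg : ∀ x, 0 ≤ g x) (x : Lat n)
    (i : Fin n) : W (x + unitVec i) ≤ (lam + 2 * n) * W x := by
  linarith [hW.add_neighbors_le hg x i, hW.pos (x - unitVec i)]

lemma le_mul_of_sub_unitVec (hW : IsPosSupersolution lam g W) (hg : ∀ x, 0 ≤ g x) (x : Lat n)
    (i : Fin n) : W (x - unitVec i) ≤ (lam + 2 * n) * W x := by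
  linarith [hW.add_neighbors_le hg x i, hW.pos (x + unitVec i)]

end IsPosSupersolution

/-- The point `p` has zero capacity in `ℤⁿ`: finitely supported functions equal to `1` at `p` can
have arbitrarily small Dirichlet energy. Equivalently, simple random walk on `ℤⁿ` is recurrent. -/
def HasZeroCapacity (p : Lat n) : Prop :=
  ∀ ε > 0, ∃ η : Lat n → ℝ, η.HasFiniteSupport ∧ η p = 1 ∧ dirichletEnergy η ≤ ε

section Divergence

variable {g : Lat n → ℝ} {W : ℝ → Lat n → ℝ}

lemma tendsto_atTop_at_source (hg : ∀ x, 0 ≤ g x)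
    (hW : ∀ᶠ lam in 𝓝[>] 0, IsPosSupersolution lam g (W lam)) {p : Lat n}
    (hcap : HasZeroCapacity p) (hp : 0 < g p) :
    Tendsto (fun lam => W lam p) (𝓝[>] 0) atTop := by
  refine tendsto_atTop.2 fun M => ?_
  set ε := g p / (2 * (|M| + 1)) with hε
  have hε_pos : 0 < ε := by positivity
  obtain ⟨η, hη, hηp, henergy⟩ := hcap ε hε_pos
  have mass_small : ∀ᶠ lam in 𝓝[>] 0, lam * ∑' x, η x ^ 2 < ε := by
    have hlim : Tendsto (fun lam => lam * ∑' x, η x ^ 2) (𝓝 0) (𝓝 0) := by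
      simpa using (tendsto_id (x := 𝓝 (0 : ℝ))).mul_const (∑' x, η x ^ 2)
    exact nhdsWithin_le_nhds (hlim.eventually_lt_const hε_pos)
  filter_upwards [hW, mass_small] with lam hWlam hmass
  have capacity_le : g p / W lam p ≤ g p / (|M| + 1) :=
    calc g p / W lam p = g p * (η p ^ 2 / W lam p) := by rw [hηp]; ring
      _ ≤ lam * ∑' x, η x ^ 2 + dirichletEnergy η := hWlam.source_mul_sq_div_le hg hη p
      _ ≤ ε + ε := add_le_add hmass.le henergy
      _ = g p / (|M| + 1) := by rw [hε]; field_simp; norm_num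
  have := (div_le_div_iff_of_pos_left hp (hWlam.pos p) (by positivity)).1 capacity_le
  linarith [le_abs_self M]

lemma tendsto_atTop_of_hasZeroCapacity (hg : ∀ x, 0 ≤ g x)
    (hW : ∀ᶠ lam in 𝓝[>] 0, IsPosSupersolution lam g (W lam)) {p : Lat n}
    (hcap : HasZeroCapacity p) (hp : 0 < g p) (x : Lat n) :
    Tendsto (fun lam => W lam x) (𝓝[>] 0) atTop := by
  have hC : (0 : ℝ) < 1 + 2 * n := by positivity
  have lam_lt_one : ∀ᶠ lam : ℝ in 𝓝[>] 0, lam < 1 := nhdsWithin_le_nhds (gt_mem_nhds one_pos)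
  have diverges_of_le {y z : Lat n}
      (hle : ∀ lam, IsPosSupersolution lam g (W lam) → W lam y ≤ (lam + 2 * n) * W lam z)
      (hy : Tendsto (fun lam => W lam y) (𝓝[>] 0) atTop) :
      Tendsto (fun lam => W lam z) (𝓝[>] 0) atTop := by
    refine (tendsto_const_mul_atTop_of_pos hC).1 (tendsto_atTop_mono' _ ?_ hy)
    filter_upwards [hW, lam_lt_one] with lam hWlam hlam
    refine (hle lam hWlam).trans (mul_le_mul_of_nonneg_right ?_ (hWlam.pos z).le)
    linarith
  refine lattice_induction (P := fun x => Tendsto (fun lam => W lam x) (𝓝[>] 0) atTop)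
    (tendsto_atTop_at_source hg hW hcap hp) (fun y i => ?_) (fun y i => ?_) x
  · refine diverges_of_le fun lam hWlam => ?_
    simpa using hWlam.le_mul_of_sub_unitVec hg (y + unitVec i) i
  · refine diverges_of_le fun lam hWlam => ?_
    simpa using hWlam.le_mul_of_add_unitVec hg (y - unitVec i) i

end Divergence

/-! ### Points of the square lattice have zero capacity -/

/-- The logarithmic cutoff of radius `N` around the origin, in the sup norm. The radius should be
positive: for `N = 0` the quotient is `0` by the convention `a / 0 = 0`, and the cutoff is
constantly `1`. -/
def logCutoff (N : ℕ) (x : Lat n) : ℝ := max (1 - log (‖x‖ + 1) / log (N + 1)) 0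

lemma logCutoff_zero (N : ℕ) : logCutoff N (0 : Lat n) = 1 := by
  simp [logCutoff]

lemma logCutoff_eq_zero {N : ℕ} (hN : 0 < log (N + 1)) {x : Lat n} (hx : N ≤ ‖x‖) :
    logCutoff N x = 0 := by
  refine max_eq_right (sub_nonpos.2 ((one_le_div hN).2 ?_))
  exact log_le_log (by positivity) (by linarith)

lemma mem_Icc_neg_natCast_iff {N : ℕ} {x : Lat n} :
    x ∈ Finset.Icc (-(N : Lat n)) N ↔ ‖x‖ ≤ N := by
  rw [pi_norm_le_iff_of_nonneg N.cast_nonneg, Finset.mem_Icc, Pi.le_def, Pi.le_def, ← forall_and]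
  refine forall_congr' fun i => ?_
  rw [Int.norm_eq_abs, abs_le]
  simp only [Pi.neg_apply, Pi.natCast_apply]
  exact_mod_cast Iff.rfl

lemma hasFiniteSupport_logCutoff {N : ℕ} (hN : 0 < log (N + 1)) :
    (logCutoff (n := n) N).HasFiniteSupport := by
  refine (Finset.finite_toSet (Finset.Icc (-(N : Lat n)) N)).subset fun x hx => ?_
  rw [Finset.mem_coe, mem_Icc_neg_natCast_iff]
  by_contra! hlt
  exact hx (logCutoff_eq_zero hN hlt.le)

lemma log_sub_log_le {a b : ℝ} (ha : 0 < a) (hb : 0 < b) : log b - log a ≤ (b - a) / a := by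
  rw [← log_div hb.ne' ha.ne', sub_div, div_self ha.ne']
  exact log_le_sub_one_of_pos (div_pos hb ha)

lemma abs_log_sub_log_le {a b : ℝ} (ha : 0 < a) (hb : 1 ≤ b) (hab : |b - a| ≤ 1) :
    |log b - log a| ≤ 2 / a := by
  have hb_pos : 0 < b := one_pos.trans_le hb
  obtain ⟨hlower, hupper⟩ := abs_le.1 hab
  refine abs_sub_le_iff.2 ⟨(log_sub_log_le ha hb_pos).trans ?_, (log_sub_log_le hb_pos ha).trans ?_⟩
  · gcongr
    linarith
  · rw [div_le_div_iff₀ hb_pos ha]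
    nlinarith

lemma abs_logCutoff_add_sub_le {N : ℕ} (hN : 0 < log (N + 1)) (x : Lat n) {e : Lat n}
    (he : ‖e‖ ≤ 1) :
    |logCutoff N (x + e) - logCutoff N x| ≤ 2 / (‖x‖ + 1) / log (N + 1) := by
  refine (abs_max_sub_max_le_abs _ _ _).trans ?_
  rw [sub_sub_sub_cancel_left, ← sub_div, abs_div, abs_of_pos hN, abs_sub_comm]
  gcongr
  refine abs_log_sub_log_le (by positivity) (by linarith [norm_nonneg (x + e)]) ?_
  rw [add_sub_add_right_eq_sub]
  exact (abs_norm_sub_norm_le _ _).trans (by simpa using he)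

lemma card_Icc_neg_natCast (N : ℕ) :
    (Finset.Icc (-(N : Lat n)) N).card = (2 * N + 1) ^ n := by
  have card_coord : ((N : ℤ) + 1 + N).toNat = 2 * N + 1 := by omega
  simp [Pi.card_Icc, card_coord]

lemma card_box_succ (k : ℕ) : (Finset.box (k + 1) : Finset (Lat 2)).card = 8 * (k + 1) := by
  have hcard := Finset.card_disjUnion _ _ (Finset.disjoint_box_succ_prod (α := Lat 2) k)
  rw [Finset.box_succ_disjUnion, card_Icc_neg_natCast, card_Icc_neg_natCast] at hcard
  grind

lemma sum_Icc_one_div_norm_add_one_sq_le (N : ℕ) :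
    ∑ x ∈ Finset.Icc (-(N : Lat 2)) N, 1 / (‖x‖ + 1) ^ 2 ≤ 1 + 8 * (harmonic N : ℝ) := by
  induction N with
  | zero => simp
  | succ k ih =>
    have term_le (x : Lat 2) (hx : x ∈ Finset.box (k + 1)) :
        1 / (‖x‖ + 1) ^ 2 ≤ 1 / ((k : ℝ) + 1) ^ 2 := by
      have hk : (k : ℝ) < ‖x‖ := by
        rw [Finset.box_succ_eq_sdiff, Finset.mem_sdiff, mem_Icc_neg_natCast_iff] at hx
        exact not_le.1 fun h => hx.2 (mem_Icc_neg_natCast_iff.2 h)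
      gcongr
    have box_le : ∑ x ∈ (Finset.box (k + 1) : Finset (Lat 2)), 1 / (‖x‖ + 1) ^ 2 ≤
        8 * ((k : ℝ) + 1)⁻¹ := by
      refine (Finset.sum_le_card_nsmul _ _ _ term_le).trans_eq ?_
      rw [card_box_succ, nsmul_eq_mul]
      push_cast
      field_simp
    rw [← Nat.succ_eq_add_one, ← Finset.box_succ_disjUnion, Finset.sum_disjUnion, harmonic_succ]
    push_cast
    linarith

lemma dirichletEnergy_logCutoff_le {N : ℕ} (hN : 1 ≤ log (N + 1)) :
    dirichletEnergy (logCutoff (n := 2) N) ≤ 136 / log (N + 1) := by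
  set L := log (N + 1) with hL
  have hL_pos : 0 < L := one_pos.trans_le hN
  have term_le (i : Fin 2) (x : Lat 2) :
      (logCutoff N (x + unitVec i) - logCutoff N x) ^ 2 ≤ 4 / L ^ 2 * (1 / (‖x‖ + 1) ^ 2) := by
    rw [← sq_abs]
    calc _ ≤ (2 / (‖x‖ + 1) / L) ^ 2 := by
          gcongr
          exact abs_logCutoff_add_sub_le hL_pos x (norm_unitVec i).le
      _ = _ := by
          field_simp
          norm_num
  have term_eq_zero (i : Fin 2) (x : Lat 2)
      (hx : x ∉ Finset.Icc (-((N + 1 : ℕ) : Lat 2)) (N + 1 : ℕ)) :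
      (logCutoff N (x + unitVec i) - logCutoff N x) ^ 2 = 0 := by
    rw [mem_Icc_neg_natCast_iff, not_le, Nat.cast_succ] at hx
    have norm_le : ‖x‖ ≤ ‖x + unitVec i‖ + 1 := by
      simpa [norm_unitVec] using norm_sub_le (x + unitVec i) (unitVec i)
    rw [logCutoff_eq_zero hL_pos (by linarith), logCutoff_eq_zero hL_pos (by linarith)]
    norm_num
  have weight_le : ∑ x ∈ Finset.Icc (-((N + 1 : ℕ) : Lat 2)) (N + 1 : ℕ), 1 / (‖x‖ + 1) ^ 2 ≤
      17 * L := by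
    have := sum_Icc_one_div_norm_add_one_sq_le (N + 1)
    have := harmonic_le_one_add_log (N + 1)
    rw [Nat.cast_succ, ← hL] at this
    linarith
  calc dirichletEnergy (logCutoff (n := 2) N)
      ≤ ∑ _i : Fin 2, 4 / L ^ 2 * (17 * L) := by
        refine Finset.sum_le_sum fun i _ => ?_
        rw [tsum_eq_sum fun x hx => term_eq_zero i x hx]
        refine (Finset.sum_le_sum fun x _ => term_le i x).trans ?_
        rw [← Finset.mul_sum]
        gcongr
    _ = 136 / L := by
        rw [Finset.sum_const, Finset.card_univ, Fintype.card_fin, nsmul_eq_mul]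
        field_simp
        norm_num

lemma hasZeroCapacity_two (p : Lat 2) : HasZeroCapacity p := by
  intro ε hε
  have log_tendsto : Tendsto (fun N : ℕ => log ((N : ℝ) + 1)) atTop atTop :=
    tendsto_log_atTop.comp (tendsto_atTop_add_const_right _ 1 tendsto_natCast_atTop_atTop)
  obtain ⟨N, hN⟩ := (log_tendsto.eventually_ge_atTop (max 1 (136 / ε))).exists
  have hN_one : 1 ≤ log ((N : ℝ) + 1) := (le_max_left _ _).trans hN
  have hN_pos : 0 < log ((N : ℝ) + 1) := one_pos.trans_le hN_one
  refine ⟨fun x => logCutoff N (x - p),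
    (hasFiniteSupport_logCutoff hN_pos).fun_comp_of_injective sub_left_injective,
    by simp [logCutoff_zero], ?_⟩
  calc dirichletEnergy (fun x => logCutoff N (x - p))
      = dirichletEnergy (logCutoff (n := 2) N) := dirichletEnergy_comp_sub _ p
    _ ≤ 136 / log (N + 1) := dirichletEnergy_logCutoff_le hN_one
    _ ≤ ε := (div_le_comm₀ hN_pos hε).2 ((le_max_right _ _).trans hN)

/-! ### Topological solutions -/

namespace IsTopSol

variable {lam : ℝ} {g h u v : Lat n → ℝ}

lemma symm (hsol : IsTopSol lam g h u v) : IsTopSol lam h g v u :=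
  ⟨hsol.2.1, hsol.1, hsol.2.2.2, hsol.2.2.1⟩

lemma nonpos (hsol : IsTopSol lam g h u v) (hlam : 0 < lam) (hg : ∀ x, 0 ≤ g x) (x : Lat n) :
    u x ≤ 0 := by
  refine nonpos_of_lapl_pos hsol.2.2.1 (fun y hy => ?_) x
  rw [hsol.1 y]
  have : 0 < exp (u y) - 1 := sub_pos.2 (one_lt_exp_iff.2 hy)
  have := hg y
  positivity

lemma nonneg (hsol : IsTopSol lam g h u v) (hlam : 0 < lam) (hg : ∀ x, g x ≤ 0) (x : Lat n) :
    0 ≤ u x := by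
  have hlim : Tendsto (-u) (atInfty n) (𝓝 0) := neg_zero (G := ℝ) ▸ hsol.2.2.1.neg
  refine neg_nonpos.1 (nonpos_of_lapl_pos hlim (fun y hy => ?_) x)
  rw [lapl_neg, hsol.1 y, neg_add, ← mul_neg, neg_sub]
  have : 0 < 1 - exp (u y) := sub_pos.2 (exp_lt_one_iff.2 (neg_pos.1 hy))
  have : 0 ≤ -g y := neg_nonneg.2 (hg y)
  positivity

lemma eq_zero_of_source_eq_zero (hsol : IsTopSol lam g h u v) (hlam : 0 < lam)
    (hg : ∀ x, g x = 0) (x : Lat n) : u x = 0 :=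
  le_antisymm (hsol.nonpos hlam (fun y => (hg y).ge) x) (hsol.nonneg hlam (fun y => (hg y).le) x)

lemma isPosSupersolution_one_sub (hsol : IsTopSol lam g h u v) (hlam : 0 < lam)
    (hg : ∀ x, 0 ≤ g x) (hh : ∀ x, 0 ≤ h x) :
    IsPosSupersolution lam g fun x => 1 - u x where
  pos x := by linarith [hsol.nonpos hlam hg x]
  lapl_le x := by
    have hexp_v : exp (v x) ≤ 1 := exp_le_one_iff.2 (hsol.symm.nonpos hlam hh x)
    have hexp_u : exp (u x) ≤ 1 := exp_le_one_iff.2 (hsol.nonpos hlam hg x)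
    have nonlinearity_le : exp (v x) * (1 - exp (u x)) ≤ 1 - u x :=
      calc exp (v x) * (1 - exp (u x)) ≤ 1 - exp (u x) :=
            mul_le_of_le_one_left (sub_nonneg.2 hexp_u) hexp_v
        _ ≤ 1 - u x := by linarith [add_one_le_exp (u x)]
    rw [lapl_const_sub, hsol.1 x]
    linarith [mul_le_mul_of_nonneg_left nonlinearity_le hlam.le]

end IsTopSol

section SmallParameter

variable {g h : Lat n → ℝ} {U V : ℝ → Lat n → ℝ}

lemma tendsto_atBot_of_source_ne_zero
    (hsol : ∀ᶠ lam in 𝓝[>] 0, IsTopSol lam g h (U lam) (V lam))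
    (hg : ∀ x, 0 ≤ g x) (hh : ∀ x, 0 ≤ h x) (hcap : ∀ p : Lat n, HasZeroCapacity p)
    (hne : ¬ ∀ y, g y = 0) (x : Lat n) :
    Tendsto (fun lam => U lam x) (𝓝[>] 0) atBot := by
  obtain ⟨p, hp⟩ := not_forall.1 hne
  have supersolution : ∀ᶠ lam in 𝓝[>] 0, IsPosSupersolution lam g fun y => 1 - U lam y := by
    filter_upwards [hsol, self_mem_nhdsWithin] with lam hlam_sol hlam
    exact hlam_sol.isPosSupersolution_one_sub hlam hg hh
  have diverges := tendsto_atTop_of_hasZeroCapacity hg supersolution (hcap p)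
    ((hg p).lt_of_ne' hp) x
  simpa using tendsto_atBot_add_const_left _ 1 (tendsto_neg_atBot_iff.2 diverges)

lemma tendsto_zero_of_source_eq_zero
    (hsol : ∀ᶠ lam in 𝓝[>] 0, IsTopSol lam g h (U lam) (V lam))
    (hg : ∀ y, g y = 0) (x : Lat n) :
    Tendsto (fun lam => U lam x) (𝓝[>] 0) (𝓝 0) := by
  refine tendsto_const_nhds.congr' ?_
  filter_upwards [hsol, self_mem_nhdsWithin] with lam hlam_sol hlam
  exact (hlam_sol.eq_zero_of_source_eq_zero hlam hg x).symm

end SmallParameter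

theorem asymptotics_lambda_to_zero_dim_two_general {g h : Lat 2 → ℝ}
    (hg : ∀ y, 0 ≤ g y) (hh : ∀ y, 0 ≤ h y) {U V : ℝ → Lat 2 → ℝ}
    (hsol : ∀ᶠ lam in 𝓝[>] 0, IsTopSol lam g h (U lam) (V lam)) (x : Lat 2) :
    ((¬ ∀ y, g y = 0) → Tendsto (fun lam => U lam x) (𝓝[>] 0) atBot) ∧
    ((¬ ∀ y, h y = 0) → Tendsto (fun lam => V lam x) (𝓝[>] 0) atBot) ∧
    ((∀ y, g y = 0) → Tendsto (fun lam => U lam x) (𝓝[>] 0) (𝓝 0)) ∧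
    ((∀ y, h y = 0) → Tendsto (fun lam => V lam x) (𝓝[>] 0) (𝓝 0)) := by
  have hsol_symm : ∀ᶠ lam in 𝓝[>] 0, IsTopSol lam h g (V lam) (U lam) :=
    hsol.mono fun _ => IsTopSol.symm
  exact ⟨fun hne => tendsto_atBot_of_source_ne_zero hsol hg hh hasZeroCapacity_two hne x,
    fun hne => tendsto_atBot_of_source_ne_zero hsol_symm hh hg hasZeroCapacity_two hne x,
    fun hzero => tendsto_zero_of_source_eq_zero hsol hzero x,
    fun hzero => tendsto_zero_of_source_eq_zero hsol_symm hzero x⟩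

lemma sum_dirac_nonneg {k : ℕ} (m : Fin k → ℕ) (p : Fin k → Lat n) (x : Lat n) :
    0 ≤ 4 * π * ∑ j, (m j : ℝ) * dirac (p j) x := by
  have dirac_nonneg (j : Fin k) : 0 ≤ dirac (p j) x := by
    unfold dirac
    split_ifs <;> norm_num
  have := Finset.sum_nonneg fun j (_ : j ∈ Finset.univ) =>
    mul_nonneg (m j).cast_nonneg (dirac_nonneg j)
  positivity

/-- asymptotic behavior on ℤ² as λ → 0⁺: each of u_λ(x), v_λ(x)
tends to −∞ if the corresponding source (g resp. h) is not identically zero,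
and tends to 0 if it is identically zero.  This covers all four cases
(g ≢ 0, h ≢ 0), (g ≢ 0, h ≡ 0), (g ≡ 0, h ≢ 0), (g ≡ 0, h ≡ 0). -/
theorem asymptotics_lambda_to_zero_dim_two
    {k₁ k₂ : ℕ} (m : Fin k₁ → ℕ) (nn : Fin k₂ → ℕ)
    (p : Fin k₁ → Lat 2) (q : Fin k₂ → Lat 2)
    (g h : Lat 2 → ℝ)
    (hg : g = fun x => 4 * Real.pi * ∑ j, (m j : ℝ) * dirac (p j) x)
    (hh : h = fun x => 4 * Real.pi * ∑ j, (nn j : ℝ) * dirac (q j) x)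
    (U V : ℝ → Lat 2 → ℝ)
    (hsol : ∀ lam : ℝ, 0 < lam → IsTopSol lam g h (U lam) (V lam))
    (x : Lat 2) :
    ((¬ ∀ y, g y = 0) →
      Filter.Tendsto (fun lam => U lam x) (nhdsWithin 0 (Set.Ioi 0)) Filter.atBot) ∧
    ((¬ ∀ y, h y = 0) →
      Filter.Tendsto (fun lam => V lam x) (nhdsWithin 0 (Set.Ioi 0)) Filter.atBot) ∧
    ((∀ y, g y = 0) →
      Filter.Tendsto (fun lam => U lam x) (nhdsWithin 0 (Set.Ioi 0)) (nhds 0)) ∧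
    ((∀ y, h y = 0) →
      Filter.Tendsto (fun lam => V lam x) (nhdsWithin 0 (Set.Ioi 0)) (nhds 0)) :=
  asymptotics_lambda_to_zero_dim_two_general
    (hg ▸ sum_dirac_nonneg m p) (hh ▸ sum_dirac_nonneg nn q) (eventually_mem_nhdsWithin.mono hsol) x

end CS
end
end

section
/- Let n ≥ 3 and fix g = 4π ∑_{j=1}^{k₁} m_j δ_{p_j}, h = 4π ∑_{j=1}^{k₂} n_j δ_{q_j} with m_j, n_j ∈ ℕ. For each λ > 0 let (u_λ, v_λ) be a topological solution of Δu = λ e^v (e^u − 1) + g, Δv = λ e^u (e^v − 1) + h on ℤⁿ. Let G_n be the Green's function of the Δ operator on ℤⁿ. Then for every x ∈ ℤⁿ, lim_{λ → 0⁺} u_λ(x) = 4π ∑_{j=1}^{k₁} m_j G_n(x − p_j) and lim_{λ → 0⁺} v_λ(x) = 4π ∑_{j=1}^{k₂} n_j G_n(x − q_j). -/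
/-!
Let `Φ` be the decaying potential of `g`, so `ΔΦ = g` and `Φ → 0` at infinity. Since `g ≥ 0`, the
maximum principle gives first `u_λ ≤ 0` and then `Φ ≤ u_λ`; likewise `v_λ ≤ 0`. Hence
`w = u_λ - Φ` satisfies `0 ≤ w ≤ -Φ`, so `w` is small outside a finite set that does not depend
on `λ`. Moreover `Δw = λ e^{v_λ} (e^{u_λ} - 1) ≥ -λ`, so `w` is almost subharmonic, and comparison
with the barrier `λ x₀²` bounds it on that finite set by its size outside plus `O(λ)`. The
convergence is therefore even uniform on `ℤⁿ`. The second component is symmetric.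
-/

open Filter Real

noncomputable section

namespace CS

section Development

open scoped Topology

variable {n : ℕ}

lemma finite_setOf_latDist_lt (N : ℕ) : {x : Lat n | latDist x < N}.Finite := by
  refine (Set.finite_Icc (fun _ => -(N : ℤ) : Lat n) (fun _ => (N : ℤ))).subset fun x hx => ?_
  have hcoord (i : Fin n) : (x i).natAbs < N :=
    (Finset.single_le_sum (f := fun i => (x i).natAbs) (fun _ _ => Nat.zero_le _)
      (Finset.mem_univ i)).trans_lt hx
  constructor <;> intro i <;> have := hcoord i <;> dsimp only <;> omega

lemma atInfty_eq_cofinite : atInfty n = cofinite := by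
  refine le_antisymm ?_ ?_
  · rw [atInfty, ← Nat.cofinite_eq_atTop]
    exact comap_cofinite_le _
  · refine tendsto_iff_comap.1 (tendsto_atTop.2 fun N => eventually_cofinite.2 ?_)
    simpa only [not_le] using finite_setOf_latDist_lt N

lemma finite_setOf_lt_of_tendsto_atInfty {f : Lat n → ℝ} {a c : ℝ}
    (hf : Tendsto f (atInfty n) (𝓝 a)) (hac : a < c) : {x | c < f x}.Finite := by
  rw [atInfty_eq_cofinite] at hf
  simpa only [not_le] using eventually_cofinite.1 (hf.eventually_le_const hac)

lemma tendsto_sub_const_atInfty (p : Lat n) :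
    Tendsto (fun x => x - p) (atInfty n) (atInfty n) := by
  rw [atInfty_eq_cofinite]
  exact sub_left_injective.tendsto_cofinite

lemma dirac_nonneg (p x : Lat n) : 0 ≤ dirac p x := by
  unfold dirac
  positivity

lemma const_mul_sum_dirac_nonneg {ι : Type*} [Fintype ι] {a : ℝ} (ha : 0 ≤ a) {c : ι → ℝ}
    (hc : ∀ j, 0 ≤ c j) (p : ι → Lat n) : 0 ≤ fun x => a * ∑ j, c j * dirac (p j) x := fun x =>
  mul_nonneg ha (Finset.sum_nonneg fun j _ => mul_nonneg (hc j) (dirac_nonneg (p j) x))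

lemma dirac_zero_sub (p x : Lat n) : dirac 0 (x - p) = dirac p x := by
  simp only [dirac, sub_eq_zero]

/-- The graph Laplacian as a linear endomorphism of the real functions on `ℤⁿ`. -/
def laplLinearMap (n : ℕ) : (Lat n → ℝ) →ₗ[ℝ] (Lat n → ℝ) where
  toFun := lapl
  map_add' f g := by
    ext x
    simp only [lapl, Pi.add_apply, ← Finset.sum_add_distrib]
    exact Finset.sum_congr rfl fun i _ => by ring
  map_smul' c f := by
    ext x
    simp only [lapl, Pi.smul_apply, smul_eq_mul, RingHom.id_apply, Finset.mul_sum]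
    exact Finset.sum_congr rfl fun i _ => by ring

lemma lapl_add (f g : Lat n → ℝ) : lapl (f + g) = lapl f + lapl g :=
  map_add (laplLinearMap n) f g

lemma lapl_sub (f g : Lat n → ℝ) : lapl (f - g) = lapl f - lapl g :=
  map_sub (laplLinearMap n) f g

lemma lapl_smul (c : ℝ) (f : Lat n → ℝ) : lapl (c • f) = c • lapl f :=
  map_smul (laplLinearMap n) c f

lemma lapl_sum {ι : Type*} (s : Finset ι) (f : ι → Lat n → ℝ) :
    lapl (∑ j ∈ s, f j) = ∑ j ∈ s, lapl (f j) :=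
  map_sum (laplLinearMap n) f s

lemma lapl_comp_sub_const (f : Lat n → ℝ) (p x : Lat n) :
    lapl (fun y => f (y - p)) x = lapl f (x - p) := by
  simp only [lapl, add_sub_right_comm, sub_right_comm]

lemma lapl_coord_sq (i : Fin n) (x : Lat n) : lapl (fun y => (y i : ℝ) ^ 2) x = 2 := by
  have hterm (j : Fin n) : ((x + unitVec j) i : ℝ) ^ 2 + ((x - unitVec j) i : ℝ) ^ 2
      - 2 * (x i : ℝ) ^ 2 = if i = j then 2 else 0 := by
    by_cases hij : i = j
    · simp only [Pi.add_apply, Pi.sub_apply, unitVec, if_pos hij]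
      push_cast
      ring
    · simp only [Pi.add_apply, Pi.sub_apply, unitVec, if_neg hij]
      push_cast
      ring
  simp only [lapl, hterm, Finset.sum_ite_eq, Finset.mem_univ, if_true]

lemma lapl_nonpos_of_forall_le_s4 {f : Lat n → ℝ} {x : Lat n}
    (hadd : ∀ i, f (x + unitVec i) ≤ f x) (hsub : ∀ i, f (x - unitVec i) ≤ f x) :
    lapl f x ≤ 0 :=
  Finset.sum_nonpos fun i _ => by linarith [hadd i, hsub i]

lemma abs_unitVec_le_one (i j : Fin n) : |unitVec i j| ≤ 1 := by
  unfold unitVec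
  split_ifs <;> simp

/-- The barrier `ε xᵢ²` has Laplacian `2ε`, so adding it makes `f` strictly subharmonic on `S`; the
sum then has no interior maximum. -/
lemma le_add_mul_sq_of_neg_le_lapl {S : Set (Lat n)} (hS : S.Finite) {i : Fin n} {R : ℤ}
    (hR : ∀ x ∈ S, |x i| ≤ R) {f : Lat n → ℝ} {c ε : ℝ} (hε : 0 < ε) (hout : ∀ x ∉ S, f x ≤ c)
    (hlapl : ∀ x ∈ S, -ε ≤ lapl f x) (x : Lat n) : f x ≤ c + ε * ((R : ℝ) + 1) ^ 2 := by
  by_contra! hx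
  have hxS : x ∈ S := by
    by_contra hxS
    linarith [hout x hxS, mul_nonneg hε.le (sq_nonneg ((R : ℝ) + 1))]
  set F : Lat n → ℝ := f + ε • fun y => (y i : ℝ) ^ 2 with hF
  have hfF (y) : f y ≤ F y := le_add_of_nonneg_right (mul_nonneg hε.le (sq_nonneg _))
  obtain ⟨y, hyS, hy⟩ := Set.exists_max_image S F hS ⟨x, hxS⟩
  have hmax (z : Lat n) (hz : |z i| ≤ |y i| + 1) : F z ≤ F y := by
    by_cases hzS : z ∈ S
    · exact hy z hzS
    have hzR : |(z i : ℝ)| ≤ R + 1 := by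
      exact_mod_cast hz.trans (add_le_add_left (hR y hyS) 1)
    have hbarrier : ε * (z i : ℝ) ^ 2 ≤ ε * ((R : ℝ) + 1) ^ 2 := by
      rw [← sq_abs (z i : ℝ)]
      gcongr
    calc F z = f z + ε * (z i : ℝ) ^ 2 := rfl
      _ ≤ c + ε * ((R : ℝ) + 1) ^ 2 := add_le_add (hout z hzS) hbarrier
      _ ≤ F x := hx.le.trans (hfF x)
      _ ≤ F y := hy x hxS
  have hF_nonpos : lapl F y ≤ 0 := lapl_nonpos_of_forall_le_s4
    (fun j => hmax _ ((abs_add_le _ _).trans (by gcongr; exact abs_unitVec_le_one j i)))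
    (fun j => hmax _ ((abs_sub _ _).trans (by gcongr; exact abs_unitVec_le_one j i)))
  have hF_eq : lapl F y = lapl f y + ε * 2 := by
    rw [hF, lapl_add, lapl_smul, Pi.add_apply, Pi.smul_apply, lapl_coord_sq, smul_eq_mul]
  linarith [hlapl y hyS]

section MaximumPrinciple

variable [NeZero n]

lemma exists_pos_forall_le_add_of_neg_le_lapl {S : Set (Lat n)} (hS : S.Finite) {η : ℝ}
    (hη : 0 < η) :
    ∃ ε > 0, ∀ (f : Lat n → ℝ) (c : ℝ), (∀ x ∉ S, f x ≤ c) → (∀ x ∈ S, -ε ≤ lapl f x) →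
      ∀ x, f x ≤ c + η := by
  obtain ⟨R, hR_nonneg, hR⟩ := (hS.image fun x => |x 0|).bddAbove.exists_ge 0
  have hRpos : 0 < ((R : ℝ) + 1) ^ 2 := by positivity
  refine ⟨η / ((R : ℝ) + 1) ^ 2, div_pos hη hRpos, fun f c hout hlapl x => ?_⟩
  simpa only [div_mul_cancel₀ η hRpos.ne'] using
    le_add_mul_sq_of_neg_le_lapl hS (fun y hy => hR _ (Set.mem_image_of_mem _ hy))
      (div_pos hη hRpos) hout hlapl x

lemma le_of_lapl_nonneg_on_finite {S : Set (Lat n)} (hS : S.Finite) {f : Lat n → ℝ} {c : ℝ}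
    (hout : ∀ x ∉ S, f x ≤ c) (hlapl : ∀ x ∈ S, 0 ≤ lapl f x) (x : Lat n) : f x ≤ c := by
  refine le_of_forall_pos_le_add fun η hη => ?_
  obtain ⟨ε, hε, hbound⟩ := exists_pos_forall_le_add_of_neg_le_lapl hS hη
  exact hbound f c hout (fun y hy => (neg_nonpos.2 hε.le).trans (hlapl y hy)) x

theorem nonpos_of_tendsto_zero_of_lapl_nonneg {f : Lat n → ℝ}
    (hf : Tendsto f (atInfty n) (𝓝 0)) (hlapl : ∀ x, 0 < f x → 0 ≤ lapl f x) (x : Lat n) :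
    f x ≤ 0 :=
  le_of_forall_gt_imp_ge_of_dense fun _ hc =>
    le_of_lapl_nonneg_on_finite (finite_setOf_lt_of_tendsto_atInfty hf hc)
      (fun _ hy => not_lt.1 hy) (fun y hy => hlapl y (hc.trans hy)) x

end MaximumPrinciple

/-- `Φ` is a potential of the source `g` that vanishes at infinity. For `n ≥ 3` and `g = δ₀` this is
the Green's function. -/
structure IsDecayingPotential (g Φ : Lat n → ℝ) : Prop where
  lapl_eq : ∀ x, lapl Φ x = g x
  tendsto_zero : Tendsto Φ (atInfty n) (𝓝 0)

lemma IsDecayingPotential.const_mul_sum_translates {ι : Type*} [Fintype ι] {G : Lat n → ℝ}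
    (hG : IsDecayingPotential (dirac 0) G) (a : ℝ) (c : ι → ℝ) (p : ι → Lat n) :
    IsDecayingPotential (fun x => a * ∑ j, c j * dirac (p j) x)
      (fun x => a * ∑ j, c j * G (x - p j)) where
  lapl_eq x := by
    have hfun : (fun x => a * ∑ j, c j * G (x - p j)) = a • ∑ j, c j • fun x => G (x - p j) := by
      ext y
      simp only [Pi.smul_apply, Finset.sum_apply, smul_eq_mul]
    simp only [hfun, lapl_smul, lapl_sum, Pi.smul_apply, Finset.sum_apply, smul_eq_mul,
      lapl_comp_sub_const, hG.lapl_eq, dirac_zero_sub]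
  tendsto_zero := by
    simpa using (tendsto_finsetSum Finset.univ fun j _ =>
      (hG.tendsto_zero.comp (tendsto_sub_const_atInfty (p j))).const_mul (c j)).const_mul a

/-- `u` vanishes at infinity and solves `Δu = r (eᵘ - 1) + g`. Each component of a solution of the
system is of this form, the other component being absorbed into the coefficient `r`. -/
structure IsScalarTopSol (r g u : Lat n → ℝ) : Prop where
  lapl_eq : ∀ x, lapl u x = r x * (Real.exp (u x) - 1) + g x
  tendsto_zero : Tendsto u (atInfty n) (𝓝 0)

section Scalar

variable {r g u Φ : Lat n → ℝ}

lemma IsScalarTopSol.neg_coeff_le_lapl_sub_potential (hu : IsScalarTopSol r g u) (hr : 0 ≤ r)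
    (hΦ : IsDecayingPotential g Φ) (x : Lat n) : -r x ≤ lapl (u - Φ) x := by
  rw [lapl_sub, Pi.sub_apply, hΦ.lapl_eq, hu.lapl_eq]
  linarith [mul_nonneg (hr x) (Real.exp_pos (u x)).le]

variable [NeZero n]

lemma IsScalarTopSol.nonpos (hu : IsScalarTopSol r g u) (hr : 0 ≤ r) (hg : 0 ≤ g) : u ≤ 0 :=
  nonpos_of_tendsto_zero_of_lapl_nonneg hu.tendsto_zero fun x hx => by
    rw [hu.lapl_eq]
    exact add_nonneg (mul_nonneg (hr x) (sub_nonneg.2 (Real.one_le_exp hx.le))) (hg x)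

lemma IsScalarTopSol.potential_le (hu : IsScalarTopSol r g u) (hr : 0 ≤ r) (hg : 0 ≤ g)
    (hΦ : IsDecayingPotential g Φ) : Φ ≤ u := by
  have hlim : Tendsto (Φ - u) (atInfty n) (𝓝 0) :=
    sub_zero (0 : ℝ) ▸ hΦ.tendsto_zero.sub hu.tendsto_zero
  refine fun x => sub_nonpos.1 (nonpos_of_tendsto_zero_of_lapl_nonneg hlim (fun y _ => ?_) x)
  have hreaction : r y * (Real.exp (u y) - 1) ≤ 0 := mul_nonpos_of_nonneg_of_nonpos (hr y)
    (sub_nonpos.2 (Real.exp_le_one_iff.2 (hu.nonpos hr hg y)))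
  rw [lapl_sub, Pi.sub_apply, hΦ.lapl_eq, hu.lapl_eq]
  linarith

theorem tendstoUniformly_potential_of_isScalarTopSol {ι : Type*} {l : Filter ι}
    {r u : ι → Lat n → ℝ} (hg : 0 ≤ g) (hΦ : IsDecayingPotential g Φ)
    (hr : ∀ᶠ i in l, 0 ≤ r i) (hr_lim : TendstoUniformly r 0 l)
    (hu : ∀ᶠ i in l, IsScalarTopSol (r i) g (u i)) : TendstoUniformly u Φ l := by
  refine Metric.tendstoUniformly_iff.2 fun η hη => ?_
  have hη3 : 0 < η / 3 := by positivity
  have hS : {x | η / 3 < -Φ x}.Finite :=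
    finite_setOf_lt_of_tendsto_atInfty (by simpa only [neg_zero] using hΦ.tendsto_zero.neg) hη3
  obtain ⟨ε, hε, hbound⟩ := exists_pos_forall_le_add_of_neg_le_lapl hS hη3
  filter_upwards [hr, Metric.tendstoUniformly_iff.1 hr_lim ε hε, hu] with i hri hrε hui x
  have hlow : Φ x ≤ u i x := hui.potential_le hri hg hΦ x
  have hup : (u i - Φ) x ≤ η / 3 + η / 3 := by
    refine hbound _ _ (fun y hy => ?_) (fun y _ => ?_) x
    · have hy : -Φ y ≤ η / 3 := not_lt.1 hy
      calc u i y - Φ y ≤ 0 - Φ y := sub_le_sub_right (hui.nonpos hri hg y) _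
        _ ≤ η / 3 := by rwa [zero_sub]
    · have hry : r i y < ε := by
        simpa only [Pi.zero_apply, dist_zero_left, Real.norm_of_nonneg (hri y)] using hrε y
      exact (neg_le_neg hry.le).trans (hui.neg_coeff_le_lapl_sub_potential hri hΦ y)
  rw [dist_comm, Real.dist_eq, abs_of_nonneg (sub_nonneg.2 hlow)]
  linarith [show (u i - Φ) x = u i x - Φ x from rfl]

end Scalar

section System

variable {lam : ℝ} {g h u v : Lat n → ℝ}

lemma IsTopSol.symm_s4 (hsol : IsTopSol lam g h u v) : IsTopSol lam h g v u :=
  ⟨hsol.2.1, hsol.1, hsol.2.2.2, hsol.2.2.1⟩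

lemma IsTopSol.isScalarTopSol (hsol : IsTopSol lam g h u v) :
    IsScalarTopSol (fun x => lam * Real.exp (v x)) g u :=
  ⟨hsol.1, hsol.2.2.1⟩

variable [NeZero n]

lemma IsTopSol.fst_nonpos (hsol : IsTopSol lam g h u v) (hlam : 0 ≤ lam) (hg : 0 ≤ g) : u ≤ 0 :=
  hsol.isScalarTopSol.nonpos (fun _ => mul_nonneg hlam (Real.exp_pos _).le) hg

variable {Φ Ψ : Lat n → ℝ} {U V : ℝ → Lat n → ℝ}

theorem tendstoUniformly_potential_of_isTopSol (hg : 0 ≤ g) (hh : 0 ≤ h)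
    (hΦ : IsDecayingPotential g Φ) (hsol : ∀ᶠ lam in 𝓝[>] 0, IsTopSol lam g h (U lam) (V lam)) :
    TendstoUniformly U Φ (𝓝[>] 0) := by
  have hpos : ∀ᶠ lam : ℝ in 𝓝[>] 0, 0 < lam := self_mem_nhdsWithin
  refine tendstoUniformly_potential_of_isScalarTopSol
    (r := fun lam x => lam * Real.exp (V lam x)) hg hΦ
    (hpos.mono fun lam hlam x => mul_nonneg hlam.le (Real.exp_pos _).le) ?_
    (hsol.mono fun lam hlam => hlam.isScalarTopSol)
  refine Metric.tendstoUniformly_iff.2 fun ε hε => ?_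
  filter_upwards [hpos, hsol, nhdsWithin_le_nhds (gt_mem_nhds hε)] with lam hlam hs hlamε x
  have hexp : Real.exp (V lam x) ≤ 1 := Real.exp_le_one_iff.2 (hs.symm_s4.fst_nonpos hlam.le hh x)
  rw [Pi.zero_apply, dist_zero_left, Real.norm_of_nonneg (by positivity)]
  exact (mul_le_of_le_one_right hlam.le hexp).trans_lt hlamε

theorem asymptotics_lambda_to_zero_high_dim_general (hg : 0 ≤ g) (hh : 0 ≤ h)
    (hΦ : IsDecayingPotential g Φ) (hΨ : IsDecayingPotential h Ψ)
    (hsol : ∀ᶠ lam in 𝓝[>] 0, IsTopSol lam g h (U lam) (V lam)) :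
    TendstoUniformly U Φ (𝓝[>] 0) ∧ TendstoUniformly V Ψ (𝓝[>] 0) :=
  ⟨tendstoUniformly_potential_of_isTopSol hg hh hΦ hsol,
    tendstoUniformly_potential_of_isTopSol hh hg hΨ (hsol.mono fun _ hs => hs.symm_s4)⟩

end System

end Development

/-- for n ≥ 3, as λ → 0⁺ the topological solutions converge
pointwise to the superpositions of Green's functions
4π ∑ⱼ mⱼ Gₙ(x − pⱼ) and 4π ∑ⱼ nⱼ Gₙ(x − qⱼ). -/
theorem asymptotics_lambda_to_zero_high_dim
    {n : ℕ} (hn : 3 ≤ n)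
    {k₁ k₂ : ℕ} (m : Fin k₁ → ℕ) (nn : Fin k₂ → ℕ)
    (p : Fin k₁ → Lat n) (q : Fin k₂ → Lat n)
    (g h : Lat n → ℝ)
    (hg : g = fun x => 4 * Real.pi * ∑ j, (m j : ℝ) * dirac (p j) x)
    (hh : h = fun x => 4 * Real.pi * ∑ j, (nn j : ℝ) * dirac (q j) x)
    (G : Lat n → ℝ)
    (hG : ∀ x, lapl G x = dirac 0 x)
    (hGlim : Filter.Tendsto G (atInfty n) (nhds 0))
    (U V : ℝ → Lat n → ℝ)
    (hsol : ∀ lam : ℝ, 0 < lam → IsTopSol lam g h (U lam) (V lam))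
    (x : Lat n) :
    Filter.Tendsto (fun lam => U lam x) (nhdsWithin 0 (Set.Ioi 0))
      (nhds (4 * Real.pi * ∑ j, (m j : ℝ) * G (x - p j))) ∧
    Filter.Tendsto (fun lam => V lam x) (nhdsWithin 0 (Set.Ioi 0))
      (nhds (4 * Real.pi * ∑ j, (nn j : ℝ) * G (x - q j))) := by
  subst hg hh
  have : NeZero n := ⟨by omega⟩
  have hpi : 0 ≤ 4 * Real.pi := by positivity
  have hpot : IsDecayingPotential (dirac 0) G := ⟨hG, hGlim⟩
  exact (asymptotics_lambda_to_zero_high_dim_general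
    (const_mul_sum_dirac_nonneg hpi (fun j => (m j).cast_nonneg) p)
    (const_mul_sum_dirac_nonneg hpi (fun j => (nn j).cast_nonneg) q)
    (hpot.const_mul_sum_translates _ _ p) (hpot.const_mul_sum_translates _ _ q)
    (eventually_mem_nhdsWithin.mono hsol)).imp (·.tendsto_at x) (·.tendsto_at x)

end CS
end
end
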